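/- arXiv:2402.04512 — 2 statements merged into one kernel-verified Lean document; each statement's English description precedes it below -/
import Mathlib

section
/- Let r ≥ 1, and for each i = 1, …, r let P_i be a finite nonempty index set and let γ_{i,p}, α_{i,p} ∈ ℕ be nonnegative integers indexed by p ∈ P_i, such that min_{p ∈ P_i} γ_{i,p} = 0 for every i. Then max over all tuples (p₁, …, p_r) ∈ P₁ × ⋯ × P_r of the quantity [max(γ_{1,p₁} + ⋯ + γ_{r,p_r}, α_{1,p₁} + ⋯ + α_{r,p_r}) − (γ_{1,p₁} + ⋯ + γ_{r,p_r})] is equal to the sum over i = 1, …, r of max over p ∈ P_i of [max(γ_{i,p}, α_{i,p}) − γ_{i,p}]. -/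
/-- The combinatorial identity of exponents of a fixed prime used in the
proof of the main lemma: if for each `i` the finitely many nonnegative integers `γ i p`
(`p` ranging over a finite nonempty index set) have minimum `0`, then the maximum over all
tuples `p` of `max (∑ γ) (∑ α) - ∑ γ` equals the sum over `i` of the maximum over `p` of
`max (γ i p) (α i p) - γ i p`. -/
theorem multiplicative_thom_sebastiani_exponent_identity
    (r : ℕ) (hr : 1 ≤ r) (ι : Fin r → Type*) [∀ i, Fintype (ι i)] [∀ i, Nonempty (ι i)]
    (γ α : ∀ i, ι i → ℕ) (hγ : ∀ i, Finset.univ.inf' Finset.univ_nonempty (γ i) = 0) :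
    (Finset.univ.sup fun p : ∀ i, ι i =>
        max (∑ i, γ i (p i)) (∑ i, α i (p i)) - ∑ i, γ i (p i)) =
      ∑ i, Finset.univ.sup fun q : ι i => max (γ i q) (α i q) - γ i q := by
  have key : ∀ i, ∃ q : ι i, α i q =
      γ i q + Finset.univ.sup fun q : ι i => max (γ i q) (α i q) - γ i q := by
    intro i
    obtain ⟨q, -, hq⟩ := Finset.exists_mem_eq_sup Finset.univ Finset.univ_nonempty
      (fun q : ι i => max (γ i q) (α i q) - γ i q)
    by_cases h : γ i q ≤ α i q
    · refine ⟨q, ?_⟩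
      rw [hq]
      omega
    · obtain ⟨z, -, hz⟩ := Finset.exists_mem_eq_inf' Finset.univ_nonempty (γ i)
      rw [hγ i] at hz
      have h1 := Finset.le_sup (f := fun q : ι i => max (γ i q) (α i q) - γ i q)
        (Finset.mem_univ z)
      refine ⟨z, ?_⟩
      rw [hq] at h1 ⊢
      omega
  apply le_antisymm
  · apply Finset.sup_le
    intro p _
    have h : ∑ i, α i (p i) ≤ ∑ i, γ i (p i) +
        ∑ i, Finset.univ.sup fun q : ι i => max (γ i q) (α i q) - γ i q := by
      rw [← Finset.sum_add_distrib]
      apply Finset.sum_le_sum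
      intro i _
      have h1 := Finset.le_sup (f := fun q : ι i => max (γ i q) (α i q) - γ i q)
        (Finset.mem_univ (p i))
      omega
    omega
  · choose p hp using key
    have h1 := Finset.le_sup (f := fun p : ∀ i, ι i =>
      max (∑ i, γ i (p i)) (∑ i, α i (p i)) - ∑ i, γ i (p i)) (Finset.mem_univ p)
    refine le_trans ?_ h1
    have h : ∑ i, α i (p i) = ∑ i, γ i (p i) +
        ∑ i, Finset.univ.sup fun q : ι i => max (γ i q) (α i q) - γ i q := by
      rw [← Finset.sum_add_distrib]
      exact Finset.sum_congr rfl fun i _ => hp i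
    omega
end

section
/- Let r ≥ 1, and for each i = 1, …, r let P_i be a finite nonempty index set and let γ_{i,p}, α_{i,p} ∈ ℕ be nonnegative integers indexed by p ∈ P_i, such that min_{p ∈ P_i} γ_{i,p} = 0 for every i. Then for every fixed tuple (p₁, …, p_r) ∈ P₁ × ⋯ × P_r there exists a tuple (q₁, …, q_r) ∈ P₁ × ⋯ × P_r such that max(γ_{1,p₁}, α_{1,p₁}) + ⋯ + max(γ_{r,p_r}, α_{r,p_r}) + (γ_{1,q₁} + ⋯ + γ_{r,q_r}) ≤ max(γ_{1,q₁} + ⋯ + γ_{r,q_r}, α_{1,q₁} + ⋯ + α_{r,q_r}) + (γ_{1,p₁} + ⋯ + γ_{r,p_r}). -/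
/-- The key combinatorial step in the proof of the main lemma: if for each
`i` the finitely many nonnegative integers `γ i p` have minimum `0`, then for every tuple
`p` there is a tuple `q` with
`∑ max (γ i (p i)) (α i (p i)) - ∑ γ i (p i) ≤ max (∑ γ i (q i)) (∑ α i (q i)) - ∑ γ i (q i)`,
stated additively to avoid truncated subtraction. -/
theorem multiplicative_thom_sebastiani_exponent_step
    (r : ℕ) (hr : 1 ≤ r) (ι : Fin r → Type*) [∀ i, Fintype (ι i)] [∀ i, Nonempty (ι i)]
    (γ α : ∀ i, ι i → ℕ) (hγ : ∀ i, Finset.univ.inf' Finset.univ_nonempty (γ i) = 0)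
    (p : ∀ i, ι i) :
    ∃ q : ∀ i, ι i,
      (∑ i, max (γ i (p i)) (α i (p i))) + ∑ i, γ i (q i) ≤
        max (∑ i, γ i (q i)) (∑ i, α i (q i)) + ∑ i, γ i (p i) := by
  have hz : ∀ i, ∃ z, γ i z = 0 := by
    intro i
    obtain ⟨z, _, hz⟩ := Finset.exists_mem_eq_inf' (Finset.univ_nonempty (α := ι i)) (γ i)
    exact ⟨z, by rw [← hz]; exact hγ i⟩
  have hq : ∀ i, ∃ q, max (γ i (p i)) (α i (p i)) + γ i q ≤ α i q + γ i (p i) := by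
    intro i
    by_cases h : γ i (p i) ≤ α i (p i)
    · exact ⟨p i, by omega⟩
    · obtain ⟨z, hz⟩ := hz i
      exact ⟨z, by omega⟩
  choose q hq using hq
  refine ⟨q, ?_⟩
  have h := Finset.sum_le_sum (s := Finset.univ) (fun i _ => hq i)
  rw [Finset.sum_add_distrib, Finset.sum_add_distrib] at h
  exact h.trans (Nat.add_le_add_right (le_max_right _ _) _)
end
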